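/- Let X ∼ N(μ, σ²I_d) with d ≥ 3 and let f : ℝ^d → (0,∞) be C² with the needed integrability. If Δ√f(x) ≤ 0 for Lebesgue-a.e. x and Δ√f < 0 on a set of positive Lebesgue measure, then E[‖X + σ²∇ log f(X) − μ‖²] < σ²d, i.e. the estimator X + σ²∇ log f(X) is superefficient. -/

import Mathlib

open MeasureTheory ProbabilityTheory Real Filter

noncomputable def gaussPi (d : ℕ) (m : EuclideanSpace ℝ (Fin d)) (v : ℝ) :
    Measure (EuclideanSpace ℝ (Fin d)) :=
  (Measure.pi fun i : Fin d => gaussianReal (m i) v.toNNReal).map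
    ⇑(EuclideanSpace.equiv (Fin d) ℝ).symm

/-- Laplacian on `ℝ^d` as the sum of second partial derivatives. -/
noncomputable def lap {d : ℕ} (F : EuclideanSpace ℝ (Fin d) → ℝ)
    (x : EuclideanSpace ℝ (Fin d)) : ℝ :=
  ∑ i : Fin d, fderiv ℝ (fun y => fderiv ℝ F y (EuclideanSpace.single i 1)) x
    (EuclideanSpace.single i 1)

/-!
Integrating by parts against the Gaussian density (Stein's identity) expresses the risk of an
estimator `X + g X` as `σ² d + E[‖g X‖² + 2 σ² (div g) X]`. For `g = σ² ∇ log f`, writing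
`log f = 2 log √f` turns the correction into `4 σ⁴ E[(Δ√f / √f) X]`, since
`‖∇ log h‖² + Δ log h = Δh / h` for `h = √f`. The Gaussian law and Lebesgue measure have the same
null sets, so this expectation is negative.
-/

section Measure

variable {α : Type*} [MeasurableSpace α] {μ : Measure α}

lemma integrable_inner_of_memLp_two {E : Type*} [NormedAddCommGroup E] [InnerProductSpace ℝ E]
    {f g : α → E} (hf : MemLp f 2 μ) (hg : MemLp g 2 μ) :
    Integrable (fun x => inner ℝ (f x) (g x)) μ :=
  (hf.norm.integrable_mul hg.norm).mono' (hf.1.inner hg.1)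
    (ae_of_all _ fun x => norm_inner_le_norm (f x) (g x))

lemma integral_neg_of_ae_nonpos {f : α → ℝ} (hint : Integrable f μ) (hle : ∀ᵐ x ∂μ, f x ≤ 0)
    (hneg : μ {x | f x < 0} ≠ 0) : ∫ x, f x ∂μ < 0 := by
  have hpos : 0 < ∫ x, -f x ∂μ := by
    rw [integral_pos_iff_support_of_nonneg_ae (hle.mono fun x => neg_nonneg.2) hint.neg,
      pos_iff_ne_zero]
    exact fun hnull => hneg (measure_mono_null (fun x hx => neg_ne_zero.2 (ne_of_lt hx)) hnull)
  rwa [integral_neg, neg_pos] at hpos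

end Measure

section Divergence

variable {E : Type*} [NormedAddCommGroup E] [NormedSpace ℝ E]

/-- The divergence of a vector field on a normed space, encoded without coordinates as the trace
of its Fréchet derivative (hence zero by convention in infinite dimension). -/
noncomputable def divergence (u : E → E) (x : E) : ℝ :=
  LinearMap.trace ℝ E (fderiv ℝ u x)

lemma divergence_const_smul (c : ℝ) (u : E → E) (x : E) :
    divergence (fun y => c • u y) x = c * divergence u x := by
  simp [divergence, ← Pi.smul_def, fderiv_const_smul_field]

lemma divergence_eq_sum_coord {ι : Type*} [Fintype ι] (b : Module.Basis ι ℝ E) (u : E → E)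
    (x : E) : divergence u x = ∑ i, b.coord i (fderiv ℝ u x (b i)) := by
  classical
  simp [divergence, LinearMap.trace_eq_matrix_trace ℝ b, Matrix.trace, LinearMap.toMatrix_apply]

lemma integrable_fderiv_apply_of_hasCompactSupport [MeasurableSpace E] [OpensMeasurableSpace E]
    {μ : Measure E} [IsFiniteMeasureOnCompacts μ] {F : Type*} [NormedAddCommGroup F]
    [NormedSpace ℝ F] {u : E → F} (hu : ContDiff ℝ 1 u) (hc : HasCompactSupport u) (w : E) :
    Integrable (fun x => fderiv ℝ u x w) μ :=
  ((hu.continuous_fderiv one_ne_zero).clm_apply continuous_const).integrable_of_hasCompactSupport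
    (hc.fderiv_apply (𝕜 := ℝ) w)

variable [FiniteDimensional ℝ E]

lemma divergence_smul {χ : E → ℝ} {u : E → E} {x : E} (hχ : DifferentiableAt ℝ χ x)
    (hu : DifferentiableAt ℝ u x) :
    divergence (fun y => χ y • u y) x = fderiv ℝ χ x (u x) + χ x * divergence u x := by
  simp [divergence, fderiv_fun_smul hχ hu, add_comm]

lemma continuous_divergence {u : E → E} (hu : ContDiff ℝ 1 u) : Continuous (divergence u) := by
  simp only [funext (divergence_eq_sum_coord (Module.finBasis ℝ E) u)]
  exact continuous_finsetSum _ fun i _ => (LinearMap.continuous_of_finiteDimensional _).comp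
    ((hu.continuous_fderiv one_ne_zero).clm_apply continuous_const)

variable (E) in
lemma exists_seq_cutoff :
    ∃ (χ : ℕ → E → ℝ) (C : ℝ), (∀ n, ContDiff ℝ 1 (χ n)) ∧ (∀ n, HasCompactSupport (χ n)) ∧
      (∀ n x, ‖χ n x‖ ≤ 1) ∧ (∀ n x, ‖fderiv ℝ (χ n) x‖ ≤ C * ((n : ℝ) + 1)⁻¹) ∧
      ∀ x, Tendsto (fun n => χ n x) atTop (nhds 1) := by
  let η : ContDiffBump (0 : E) := ⟨1, 2, one_pos, one_lt_two⟩
  have hη : ContDiff ℝ 1 η := η.contDiff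
  obtain ⟨C, hC⟩ := (η.hasCompactSupport.fderiv (𝕜 := ℝ)).exists_bound_of_continuous
    (hη.continuous_fderiv one_ne_zero)
  refine ⟨fun n x => η (((n : ℝ) + 1)⁻¹ • x), C, fun n => hη.comp (contDiff_const_smul _),
    fun n => η.hasCompactSupport.comp_smul (by positivity), fun n x => ?_, fun n x => ?_,
    fun x => ?_⟩
  · rw [Real.norm_of_nonneg η.nonneg]
    exact η.le_one
  · rw [fderiv_comp_smul, norm_smul, Real.norm_of_nonneg (by positivity), mul_comm]
    gcongr
    exact hC _
  · have hscale : Tendsto (fun n : ℕ => ((n : ℝ) + 1)⁻¹ • x) atTop (nhds 0) := by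
      simpa using (tendsto_one_div_add_atTop_nhds_zero_nat (𝕜 := ℝ)).smul_const x
    have hη_zero : η 0 = 1 := η.one_of_mem_closedBall (by simp [η])
    simpa only [hη_zero, Function.comp_def] using (η.continuous.tendsto 0).comp hscale

variable [MeasurableSpace E] [BorelSpace E] {μ : Measure E} [μ.IsAddHaarMeasure]

lemma integral_fderiv_apply_eq_zero_of_hasCompactSupport {F : Type*} [NormedAddCommGroup F]
    [NormedSpace ℝ F] {u : E → F} (hu : ContDiff ℝ 1 u) (hc : HasCompactSupport u) (w : E) :
    ∫ x, fderiv ℝ u x w ∂μ = 0 := by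
  simpa using integral_smul_fderiv_eq_neg_fderiv_smul_of_integrable (μ := μ) (𝕜 := ℝ)
    (f := fun _ => (1 : ℝ)) (g := u) (v := w) (by simp)
    (by simpa using integrable_fderiv_apply_of_hasCompactSupport hu hc w)
    (by simpa using hu.continuous.integrable_of_hasCompactSupport hc)
    (fun x _ => by fun_prop) (fun x _ => hu.differentiable one_ne_zero x)

lemma integral_divergence_eq_zero_of_hasCompactSupport {u : E → E} (hu : ContDiff ℝ 1 u)
    (hc : HasCompactSupport u) : ∫ x, divergence u x ∂μ = 0 := by
  let b := Module.finBasis ℝ E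
  have hint (i) : Integrable (fun x => fderiv ℝ u x (b i)) μ :=
    integrable_fderiv_apply_of_hasCompactSupport hu hc (b i)
  let coord (i) : E →L[ℝ] ℝ := (b.coord i).toContinuousLinearMap
  calc ∫ x, divergence u x ∂μ = ∫ x, ∑ i, coord i (fderiv ℝ u x (b i)) ∂μ := by
        simp only [divergence_eq_sum_coord b, coord, LinearMap.coe_toContinuousLinearMap']
    _ = ∑ i, coord i (∫ x, fderiv ℝ u x (b i) ∂μ) := by
        rw [integral_finsetSum _ fun i _ => (coord i).integrable_comp (hint i)]
        exact Finset.sum_congr rfl fun i _ => (coord i).integral_comp_comm (hint i)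
    _ = 0 := by simp [integral_fderiv_apply_eq_zero_of_hasCompactSupport hu hc]

-- Multiplying by cutoffs reduces to compact support; their gradients are `O(1 / n)`, so the extra
-- term disappears because `u` is integrable.
theorem integral_divergence_eq_zero {u : E → E} (hu : ContDiff ℝ 1 u) (hint : Integrable u μ)
    (hdiv : Integrable (divergence u) μ) : ∫ x, divergence u x ∂μ = 0 := by
  obtain ⟨χ, C, hχ, hχc, hχ_le, hχ', hχ_lim⟩ := exists_seq_cutoff E
  have hfderiv_le (n x) : ‖fderiv ℝ (χ n) x (u x)‖ ≤ C * ((n : ℝ) + 1)⁻¹ * ‖u x‖ :=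
    (fderiv ℝ (χ n) x).le_of_opNorm_le (hχ' n x) _
  have hC : 0 ≤ C := by simpa using (norm_nonneg _).trans (hχ' 0 0)
  have hcut (n) : ∫ x, (fderiv ℝ (χ n) x (u x) + χ n x * divergence u x) ∂μ = 0 := by
    rw [← integral_divergence_eq_zero_of_hasCompactSupport (μ := μ) ((hχ n).smul hu)
      ((hχc n).smul_right (f' := u))]
    exact integral_congr_ae (ae_of_all _ fun x => (divergence_smul
      ((hχ n).differentiable one_ne_zero x) (hu.differentiable one_ne_zero x)).symm)
  have hlim : Tendsto (fun n => ∫ x, (fderiv ℝ (χ n) x (u x) + χ n x * divergence u x) ∂μ) atTop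
      (nhds (∫ x, divergence u x ∂μ)) := by
    refine tendsto_integral_of_dominated_convergence (fun x => C * ‖u x‖ + ‖divergence u x‖)
      (fun n => ?_) ((hint.norm.const_mul C).add hdiv.norm) (fun n => ae_of_all _ fun x => ?_)
      (ae_of_all _ fun x => ?_)
    · exact ((((hχ n).continuous_fderiv one_ne_zero).clm_apply hu.continuous).add
        ((hχ n).continuous.mul (continuous_divergence hu))).aestronglyMeasurable
    · refine (norm_add_le _ _).trans (add_le_add ((hfderiv_le n x).trans ?_) ?_)
      · gcongr
        exact mul_le_of_le_one_right hC (inv_le_one_of_one_le₀ (by simp))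
      · rw [norm_mul]
        exact mul_le_of_le_one_left (norm_nonneg _) (hχ_le n x)
    · have hbound : Tendsto (fun n : ℕ => C * ((n : ℝ) + 1)⁻¹ * ‖u x‖) atTop (nhds 0) := by
        simpa using
          ((tendsto_one_div_add_atTop_nhds_zero_nat (𝕜 := ℝ)).const_mul C).mul_const ‖u x‖
      simpa using (squeeze_zero_norm (hfderiv_le · x) hbound).add
        ((hχ_lim x).mul_const (divergence u x))
  exact tendsto_nhds_unique hlim (by simp [hcut])

lemma integral_mul_divergence_eq_neg_integral_fderiv_apply {p : E → ℝ} {u : E → E}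
    (hp : ContDiff ℝ 1 p) (hu : ContDiff ℝ 1 u) (hpu : Integrable (fun x => p x • u x) μ)
    (hpu' : Integrable (fun x => p x * divergence u x) μ)
    (hp'u : Integrable (fun x => fderiv ℝ p x (u x)) μ) :
    ∫ x, p x * divergence u x ∂μ = -∫ x, fderiv ℝ p x (u x) ∂μ := by
  have hproduct : divergence (fun x => p x • u x) =
      fun x => fderiv ℝ p x (u x) + p x * divergence u x :=
    funext fun x => divergence_smul (hp.differentiable one_ne_zero x)
      (hu.differentiable one_ne_zero x)
  have hzero : ∫ x, (fderiv ℝ p x (u x) + p x * divergence u x) ∂μ = 0 := by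
    rw [← hproduct]
    exact integral_divergence_eq_zero (hp.smul hu) hpu (hproduct ▸ hp'u.add hpu')
  rw [integral_add hp'u hpu'] at hzero
  linarith

end Divergence

section Gradient

open scoped Gradient InnerProductSpace

variable {E : Type*} [NormedAddCommGroup E] [InnerProductSpace ℝ E]

lemma divergence_eq_sum_fderiv_inner {ι : Type*} [Fintype ι] (b : OrthonormalBasis ι ℝ E)
    {u : E → E} {x : E} (hu : DifferentiableAt ℝ u x) :
    divergence u x = ∑ i, fderiv ℝ (fun y => ⟪u y, b i⟫_ℝ) x (b i) := by
  simp [divergence, LinearMap.trace_eq_sum_inner _ b, fderiv_inner_apply ℝ hu,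
    real_inner_comm]

section Complete

variable [CompleteSpace E]

lemma contDiff_gradient {f : E → ℝ} {k n : WithTop ℕ∞} (hf : ContDiff ℝ n f) (hk : k + 1 ≤ n) :
    ContDiff ℝ k (∇ f) :=
  (InnerProductSpace.toDual ℝ E).symm.contDiff.comp (hf.fderiv_right hk)

lemma gradient_log {h : E → ℝ} {x : E} (hh : DifferentiableAt ℝ h x) (hx : h x ≠ 0) :
    ∇ (fun y => log (h y)) x = (h x)⁻¹ • ∇ h x := by
  simp [gradient, fderiv.log hh hx]

lemma gradient_log_eq_two_smul_gradient_log_sqrt {f : E → ℝ} (hf : ∀ x, 0 ≤ f x) (x : E) :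
    ∇ (fun y => log (f y)) x = (2 : ℝ) • ∇ (fun y => log √(f y)) x := by
  have hlog : (fun y => log (f y)) = (2 : ℝ) • fun y => log √(f y) := by
    ext y
    simp only [Pi.smul_apply, log_sqrt (hf y), smul_eq_mul]
    ring
  rw [hlog]
  simp [gradient, fderiv_const_smul_field]

end Complete

variable [FiniteDimensional ℝ E]

lemma divergence_gradient_log {h : E → ℝ} (hh : ContDiff ℝ 2 h) (hne : ∀ x, h x ≠ 0) (x : E) :
    divergence (∇ fun y => log (h y)) x =
      divergence (∇ h) x / h x - ‖∇ (fun y => log (h y)) x‖ ^ 2 := by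
  have hh' (y) : DifferentiableAt ℝ h y := hh.differentiable two_ne_zero y
  have hgrad : DifferentiableAt ℝ (∇ h) x :=
    (contDiff_gradient (k := 1) hh one_add_one_eq_two.le).differentiable one_ne_zero x
  have hinv : HasFDerivAt (fun y => (h y)⁻¹) (-(h x ^ 2)⁻¹ • fderiv ℝ h x) x :=
    (hasDerivAt_inv (hne x)).comp_hasFDerivAt x (hh' x).hasFDerivAt
  have hfield : (∇ fun y => log (h y)) = fun y => (h y)⁻¹ • ∇ h y :=
    funext fun y => gradient_log (hh' y) (hne y)
  rw [hfield, divergence_smul hinv.differentiableAt hgrad, hinv.fderiv,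
    smul_apply, ← inner_gradient_left, real_inner_self_eq_norm_sq, norm_smul,
    mul_pow, norm_inv, inv_pow, Real.norm_eq_abs, sq_abs, smul_eq_mul]
  ring

lemma norm_gradient_log_sq_add_two_mul_divergence {f : E → ℝ} (hf : ContDiff ℝ 2 f)
    (hpos : ∀ x, 0 < f x) (x : E) :
    ‖∇ (fun y => log (f y)) x‖ ^ 2 + 2 * divergence (∇ fun y => log (f y)) x =
      4 * (divergence (∇ fun y => √(f y)) x / √(f x)) := by
  have hsqrt : ContDiff ℝ 2 fun y => √(f y) := hf.sqrt fun y => (hpos y).ne'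
  have hlog := divergence_gradient_log hsqrt (fun y => (sqrt_pos.2 (hpos y)).ne') x
  rw [funext (gradient_log_eq_two_smul_gradient_log_sqrt fun y => (hpos y).le),
    divergence_const_smul, hlog, norm_smul, mul_pow, Real.norm_eq_abs, sq_abs]
  ring

lemma lap_eq_divergence_gradient {d : ℕ} {F : EuclideanSpace ℝ (Fin d) → ℝ}
    (hF : ContDiff ℝ 2 F) : lap F = divergence (∇ F) := by
  ext x
  have hgrad : DifferentiableAt ℝ (∇ F) x :=
    (contDiff_gradient (k := 1) hF one_add_one_eq_two.le).differentiable one_ne_zero x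
  simp [lap, divergence_eq_sum_fderiv_inner (EuclideanSpace.basisFun (Fin d) ℝ) hgrad,
    inner_gradient_left]

end Gradient

section Gaussian

open scoped Gradient InnerProductSpace

section Density

variable {E : Type*} [NormedAddCommGroup E] [InnerProductSpace ℝ E]

/-- The Lebesgue density of the isotropic Gaussian law with mean `m` and variance `v` in every
direction. -/
noncomputable def gaussianDensity (m : E) (v : ℝ) (x : E) : ℝ :=
  (√(2 * π * v))⁻¹ ^ Module.finrank ℝ E * exp (-‖x - m‖ ^ 2 / (2 * v))

lemma gaussianDensity_pos (m : E) {v : ℝ} (hv : 0 < v) (x : E) : 0 < gaussianDensity m v x := by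
  unfold gaussianDensity
  positivity

lemma contDiff_gaussianDensity (m : E) (v : ℝ) {n : WithTop ℕ∞} :
    ContDiff ℝ n (gaussianDensity m v) := by
  have hsq : ContDiff ℝ n fun x => ‖x - m‖ ^ 2 := (contDiff_id.sub contDiff_const).norm_sq ℝ
  exact contDiff_const.mul (hsq.neg.div_const _).exp

lemma fderiv_gaussianDensity (m : E) (v : ℝ) (x w : E) :
    fderiv ℝ (gaussianDensity m v) x w = -(gaussianDensity m v x * (⟪x - m, w⟫_ℝ / v)) := by
  have hsq := ((hasFDerivAt_id x).sub_const m).norm_sq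
  have hexp := ((hsq.fun_neg.mul_const (2 * v)⁻¹).exp).const_mul
    ((√(2 * π * v))⁻¹ ^ Module.finrank ℝ E)
  simp only [← div_eq_mul_inv, id] at hexp
  have hdensity : HasFDerivAt (gaussianDensity m v) _ x := hexp
  rw [hdensity.fderiv]
  simp only [gaussianDensity, ContinuousLinearMap.comp_id, neg_apply, smul_apply,
    coe_innerSL_apply, nsmul_eq_mul, Nat.cast_ofNat, smul_eq_mul]
  ring

end Density

lemma pi_withDensity_ofReal {ι : Type*} [Fintype ι] {α : ι → Type*}
    [∀ i, MeasurableSpace (α i)] {μ : ∀ i, Measure (α i)} [∀ i, SigmaFinite (μ i)]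
    {p : ∀ i, α i → ℝ} (hp : ∀ i, Integrable (p i) (μ i)) (hp0 : ∀ i x, 0 ≤ p i x) :
    Measure.pi (fun i => (μ i).withDensity fun x => ENNReal.ofReal (p i x)) =
      (Measure.pi μ).withDensity fun x => ENNReal.ofReal (∏ i, p i (x i)) := by
  have hσ (i) : SigmaFinite ((μ i).withDensity fun x => ENNReal.ofReal (p i x)) :=
    SigmaFinite.withDensity_ofReal _
  refine Measure.pi_eq fun s hs => ?_
  rw [withDensity_apply _ (MeasurableSet.univ_pi hs), Measure.restrict_pi_pi,
    ← ofReal_integral_eq_lintegral_ofReal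
      (Integrable.fintype_prod_dep (f := p) fun i => (hp i).restrict)
      (ae_of_all _ fun x => Finset.prod_nonneg fun i _ => hp0 i (x i)),
    integral_fintype_prod_eq_prod p,
    ENNReal.ofReal_prod_of_nonneg fun i _ => integral_nonneg (hp0 i)]
  refine Finset.prod_congr rfl fun i _ => ?_
  rw [withDensity_apply _ (hs i),
    ofReal_integral_eq_lintegral_ofReal (hp i).restrict (ae_of_all _ (hp0 i))]

variable {d : ℕ} {m : EuclideanSpace ℝ (Fin d)} {v : ℝ}

lemma gaussianDensity_eq_prod_gaussianPDFReal (hv : 0 ≤ v) (x : EuclideanSpace ℝ (Fin d)) :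
    gaussianDensity m v x = ∏ i, gaussianPDFReal (m i) v.toNNReal (x i) := by
  simp [gaussianDensity, gaussianPDFReal, Finset.prod_mul_distrib, ← exp_sum, hv,
    EuclideanSpace.real_norm_sq_eq, ← Finset.sum_div]

lemma gaussPi_eq_map_toLp :
    gaussPi d m v = (Measure.pi fun i => gaussianReal (m i) v.toNNReal).map
      (MeasurableEquiv.toLp 2 (Fin d → ℝ)) :=
  rfl

instance isProbabilityMeasure_gaussPi : IsProbabilityMeasure (gaussPi d m v) :=
  Measure.isProbabilityMeasure_map (by fun_prop)

lemma gaussPi_eq_withDensity (hv : 0 < v) :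
    gaussPi d m v = volume.withDensity fun x => ENNReal.ofReal (gaussianDensity m v x) := by
  have hv' : v.toNNReal ≠ 0 := by simpa using hv
  ext s hs
  rw [gaussPi_eq_map_toLp, MeasurableEquiv.map_apply]
  simp only [gaussianReal_of_var_ne_zero _ hv', gaussianPDF_def]
  rw [pi_withDensity_ofReal (fun i => integrable_gaussianPDFReal (m i) _)
      (fun i => gaussianPDFReal_nonneg (m i) _), ← volume_pi,
    withDensity_apply _ ((MeasurableEquiv.measurable _) hs), withDensity_apply _ hs]
  simp only [gaussianDensity_eq_prod_gaussianPDFReal hv.le]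
  exact (PiLp.volume_preserving_toLp (Fin d)).setLIntegral_comp_preimage_emb
    (MeasurableEquiv.toLp 2 _).measurableEmbedding
    (fun x => ENNReal.ofReal (∏ i, gaussianPDFReal (m i) v.toNNReal (x i))) s

lemma measurable_ofReal_gaussianDensity :
    Measurable fun x => ENNReal.ofReal (gaussianDensity m v x) :=
  (contDiff_gaussianDensity m v (n := 0)).continuous.measurable.ennreal_ofReal

lemma gaussPi_absolutelyContinuous_volume (hv : 0 < v) : gaussPi d m v ≪ volume := by
  rw [gaussPi_eq_withDensity hv]
  exact withDensity_absolutelyContinuous _ _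

lemma volume_absolutelyContinuous_gaussPi (hv : 0 < v) : volume ≪ gaussPi d m v := by
  rw [gaussPi_eq_withDensity hv]
  exact withDensity_absolutelyContinuous' measurable_ofReal_gaussianDensity.aemeasurable
    (ae_of_all _ fun x => by simpa using gaussianDensity_pos m hv x)

section Integral

variable {F : Type*} [NormedAddCommGroup F] [NormedSpace ℝ F] {g : EuclideanSpace ℝ (Fin d) → F}

lemma integrable_gaussPi_iff (hv : 0 < v) :
    Integrable g (gaussPi d m v) ↔ Integrable fun x => gaussianDensity m v x • g x := by
  rw [gaussPi_eq_withDensity hv,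
    integrable_withDensity_iff_integrable_smul' measurable_ofReal_gaussianDensity (by simp)]
  simp only [ENNReal.toReal_ofReal (gaussianDensity_pos m hv _).le]

lemma integral_gaussPi (hv : 0 < v) :
    ∫ x, g x ∂gaussPi d m v = ∫ x, gaussianDensity m v x • g x := by
  rw [gaussPi_eq_withDensity hv,
    integral_withDensity_eq_integral_toReal_smul measurable_ofReal_gaussianDensity (by simp)]
  simp only [ENNReal.toReal_ofReal (gaussianDensity_pos m hv _).le]

end Integral

lemma measurePreserving_eval_gaussPi (i : Fin d) :
    MeasurePreserving (fun x => x i) (gaussPi d m v) (gaussianReal (m i) v.toNNReal) where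
  measurable := by fun_prop
  map_eq := by
    rw [gaussPi_eq_map_toLp, Measure.map_map (by fun_prop) (by fun_prop)]
    exact (measurePreserving_eval (fun i => gaussianReal (m i) v.toNNReal) i).map_eq

lemma memLp_sub_mean_gaussPi : MemLp (fun x => x - m) 2 (gaussPi d m v) :=
  MemLp.of_eval_piLp fun i =>
    ((memLp_id_gaussianReal 2).sub (memLp_const (m i))).comp_measurePreserving
      (measurePreserving_eval_gaussPi i)

lemma integral_norm_sub_mean_sq_gaussPi (hv : 0 ≤ v) :
    ∫ x, ‖x - m‖ ^ 2 ∂gaussPi d m v = v * d := by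
  have hvariance (i) : ∫ x, (x i - m i) ^ 2 ∂gaussPi d m v = v := by
    have hreal := variance_fun_id_gaussianReal (μ := m i) (v := v.toNNReal)
    rw [variance_eq_integral (by fun_prop), ← (measurePreserving_eval_gaussPi i).map_eq,
      integral_map (by fun_prop) (by fun_prop)] at hreal
    simpa [hv, (measurePreserving_eval_gaussPi i).map_eq] using hreal
  have hint (i) : Integrable (fun x => (x i - m i) ^ 2) (gaussPi d m v) :=
    (memLp_sub_mean_gaussPi.eval_piLp i).integrable_sq
  simp only [EuclideanSpace.real_norm_sq_eq, PiLp.sub_apply]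
  rw [integral_finsetSum _ fun i _ => hint i]
  simp [hvariance, mul_comm]

variable {g : EuclideanSpace ℝ (Fin d) → EuclideanSpace ℝ (Fin d)}

/-- Stein's identity. -/
theorem integral_inner_sub_mean_gaussPi (hv : 0 < v) (hg : ContDiff ℝ 1 g)
    (hint : Integrable g (gaussPi d m v)) (hdiv : Integrable (divergence g) (gaussPi d m v))
    (hinner : Integrable (fun x => ⟪x - m, g x⟫_ℝ) (gaussPi d m v)) :
    ∫ x, ⟪x - m, g x⟫_ℝ ∂gaussPi d m v = v * ∫ x, divergence g x ∂gaussPi d m v := by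
  have hscore (x) : fderiv ℝ (gaussianDensity m v) x (g x) =
      -(gaussianDensity m v x • (⟪x - m, g x⟫_ℝ / v)) := fderiv_gaussianDensity m v x (g x)
  have hparts := integral_mul_divergence_eq_neg_integral_fderiv_apply (μ := volume)
    (contDiff_gaussianDensity m v) hg ((integrable_gaussPi_iff hv).1 hint)
    ((integrable_gaussPi_iff hv).1 hdiv)
    (by simpa only [hscore] using ((integrable_gaussPi_iff hv).1 (hinner.div_const v)).fun_neg)
  simp only [hscore, integral_neg, neg_neg, ← integral_gaussPi hv, ← smul_eq_mul] at hparts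
  rw [hparts, integral_div, mul_div_cancel₀ _ hv.ne']

/-- Stein's unbiased risk estimate. -/
theorem integral_norm_add_sub_mean_sq_gaussPi (hv : 0 < v) (hg : ContDiff ℝ 1 g)
    (hg2 : MemLp g 2 (gaussPi d m v)) (hdiv : Integrable (divergence g) (gaussPi d m v)) :
    ∫ x, ‖x + g x - m‖ ^ 2 ∂gaussPi d m v =
      v * d + ∫ x, (‖g x‖ ^ 2 + 2 * v * divergence g x) ∂gaussPi d m v := by
  have hinner : Integrable (fun x => ⟪x - m, g x⟫_ℝ) (gaussPi d m v) :=
    integrable_inner_of_memLp_two memLp_sub_mean_gaussPi hg2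
  have hX : Integrable (fun x => ‖x - m‖ ^ 2) (gaussPi d m v) :=
    memLp_sub_mean_gaussPi.norm.integrable_sq
  have hcross : Integrable (fun x => ‖x - m‖ ^ 2 + 2 * ⟪x - m, g x⟫_ℝ) (gaussPi d m v) :=
    hX.add (hinner.const_mul 2)
  have hgg : Integrable (fun x => ‖g x‖ ^ 2) (gaussPi d m v) := hg2.norm.integrable_sq
  calc ∫ x, ‖x + g x - m‖ ^ 2 ∂gaussPi d m v
      = ∫ x, (‖x - m‖ ^ 2 + 2 * ⟪x - m, g x⟫_ℝ + ‖g x‖ ^ 2) ∂gaussPi d m v := by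
        simp only [add_sub_right_comm, norm_add_sq_real]
    _ = v * d + 2 * (v * ∫ x, divergence g x ∂gaussPi d m v)
          + ∫ x, ‖g x‖ ^ 2 ∂gaussPi d m v := by
        rw [integral_add hcross hgg, integral_add hX (hinner.const_mul 2),
          integral_const_mul, integral_norm_sub_mean_sq_gaussPi hv.le,
          integral_inner_sub_mean_gaussPi hv hg (hg2.integrable one_le_two) hdiv hinner]
    _ = v * d + ∫ x, (‖g x‖ ^ 2 + 2 * v * divergence g x) ∂gaussPi d m v := by
        rw [integral_add hgg (hdiv.const_mul _), integral_const_mul]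
        ring

theorem integral_norm_add_smul_gradient_log_sub_mean_sq_gaussPi (hv : 0 < v)
    {f : EuclideanSpace ℝ (Fin d) → ℝ} (hf : ContDiff ℝ 2 f) (hpos : ∀ x, 0 < f x)
    (hgrad : Integrable (fun x => ‖∇ (fun y => log (f y)) x‖ ^ 2) (gaussPi d m v))
    (hlap : Integrable (fun x => lap (fun y => √(f y)) x / √(f x)) (gaussPi d m v)) :
    ∫ x, ‖x + v • ∇ (fun y => log (f y)) x - m‖ ^ 2 ∂gaussPi d m v =
      v * d + 4 * v ^ 2 * ∫ x, lap (fun y => √(f y)) x / √(f x) ∂gaussPi d m v := by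
  set g := ∇ fun y => log (f y)
  have hg_contDiff : ContDiff ℝ 1 g :=
    contDiff_gradient (hf.log fun x => (hpos x).ne') one_add_one_eq_two.le
  have hpointwise (x) :
      ‖g x‖ ^ 2 + 2 * divergence g x = 4 * (lap (fun y => √(f y)) x / √(f x)) := by
    rw [lap_eq_divergence_gradient (hf.sqrt fun x => (hpos x).ne')]
    exact norm_gradient_log_sq_add_two_mul_divergence hf hpos x
  have hdiv : Integrable (divergence g) (gaussPi d m v) := by
    have hdivergence : divergence g = fun x =>
        2 * (lap (fun y => √(f y)) x / √(f x)) - 2⁻¹ * ‖g x‖ ^ 2 := by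
      ext x
      linarith [hpointwise x]
    exact hdivergence ▸ (hlap.const_mul 2).sub (hgrad.const_mul 2⁻¹)
  have hmemLp : MemLp g 2 (gaussPi d m v) :=
    (memLp_two_iff_integrable_sq_norm hg_contDiff.continuous.aestronglyMeasurable).2 hgrad
  have hdiv_smul : divergence (fun y => v • g y) = fun x => v * divergence g x :=
    funext (divergence_const_smul v g)
  rw [integral_norm_add_sub_mean_sq_gaussPi hv (hg_contDiff.const_smul v) (hmemLp.const_smul v)
    (hdiv_smul ▸ hdiv.const_mul v), ← integral_const_mul]
  congr 2 with x
  rw [hdiv_smul, norm_smul, mul_pow, Real.norm_eq_abs, sq_abs]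
  linear_combination v ^ 2 * hpointwise x

end Gaussian

/-- Superefficiency of Stein-type estimators: if `d ≥ 3`, `f > 0` is `C²` with the
needed integrability, `Δ√f ≤ 0` a.e. and `Δ√f < 0` on a set of positive Lebesgue
measure, then `E[‖X + σ²∇log f(X) − μ‖²] < σ²d`. -/
theorem stein_superefficient
    (d : ℕ) (hd : 3 ≤ d) (m : EuclideanSpace ℝ (Fin d)) (σ : ℝ) (hσ : 0 < σ)
    (f : EuclideanSpace ℝ (Fin d) → ℝ)
    (hf : ContDiff ℝ 2 f) (hfpos : ∀ x, 0 < f x)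
    (hint1 : Integrable
      (fun x => ‖x + σ ^ 2 • gradient (fun y => Real.log (f y)) x - m‖ ^ 2)
      (gaussPi d m (σ ^ 2)))
    (hint2 : Integrable
      (fun x => ‖gradient (fun y => Real.log (f y)) x‖ ^ 2) (gaussPi d m (σ ^ 2)))
    (hint3 : Integrable
      (fun x => lap (fun y => Real.sqrt (f y)) x / Real.sqrt (f x))
      (gaussPi d m (σ ^ 2)))
    (hsh : ∀ᵐ x ∂(volume : Measure (EuclideanSpace ℝ (Fin d))),
      lap (fun y => Real.sqrt (f y)) x ≤ 0)
    (hneg : 0 < volume {x : EuclideanSpace ℝ (Fin d) |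
      lap (fun y => Real.sqrt (f y)) x < 0}) :
    ∫ x, ‖x + σ ^ 2 • gradient (fun y => Real.log (f y)) x - m‖ ^ 2
        ∂(gaussPi d m (σ ^ 2)) < σ ^ 2 * d := by
  have hv : 0 < σ ^ 2 := by positivity
  have hsqrt (x) : 0 < √(f x) := Real.sqrt_pos.2 (hfpos x)
  have hlap_neg : ∫ x, lap (fun y => √(f y)) x / √(f x) ∂gaussPi d m (σ ^ 2) < 0 := by
    refine integral_neg_of_ae_nonpos hint3 ?_ fun hnull => hneg.ne' ?_
    · filter_upwards [(gaussPi_absolutelyContinuous_volume hv).ae_le hsh] with x hx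
      exact div_nonpos_of_nonpos_of_nonneg hx (hsqrt x).le
    · exact measure_mono_null (fun x hx => div_neg_of_neg_of_pos hx (hsqrt x))
        (volume_absolutelyContinuous_gaussPi hv hnull)
  rw [integral_norm_add_smul_gradient_log_sub_mean_sq_gaussPi hv hf hfpos hint2 hint3]
  linarith [mul_neg_of_pos_of_neg (by positivity : 0 < 4 * (σ ^ 2) ^ 2) hlap_neg]
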